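/- Let α ∈ 𝕀 be an irrational power series and (Q_k)_{k≥1} the denominators of its continued fraction convergents. If liminf_{k→∞} (log ‖Q_k‖)/k < ∞, then for every ε > 0 the set Bad^ε(α) has Hausdorff dimension strictly less than 1. -/

import Mathlib

/-!
Common setup: the field `𝔽_q((z⁻¹))` of formal power series over a finite field `K` of
cardinality `q`, modeled as the field `FF K` of formal Laurent series in `t = z⁻¹`,
together with its non-Archimedean norm, the embedding of the polynomial ring `𝔽_q[z]`,
distances to polynomial (vectors), Diophantine exponents, `Bad` sets, continued fractions
and best approximation sequences.
-/

open scoped Classical ENNReal NNReal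
open Filter

noncomputable section

set_option linter.unusedSectionVars false

namespace FPSDA

variable (K : Type*) [Field K] [Fintype K]

/-- The field `𝔽_q((z⁻¹))` of formal power series in `z⁻¹` over the finite field `K = 𝔽_q`,
modeled as the field of formal Laurent series in the variable `t = z⁻¹`. -/
def FF : Type _ := LaurentSeries K

instance : Field (FF K) := inferInstanceAs (Field (LaurentSeries K))

variable {K}

/-- The identity map, viewing an element of `𝔽_q((z⁻¹))` as a Laurent series in `t = z⁻¹`. -/
def toL (x : FF K) : LaurentSeries K := x

@[simp] lemma toL_zero : toL (0 : FF K) = 0 := rfl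
@[simp] lemma toL_add (x y : FF K) : toL (x + y) = toL x + toL y := rfl
@[simp] lemma toL_neg (x : FF K) : toL (-x) = -toL x := rfl
@[simp] lemma toL_sub (x y : FF K) : toL (x - y) = toL x - toL y := rfl
lemma toL_eq_zero {x : FF K} : toL x = 0 ↔ x = 0 := Iff.rfl

/-- The norm `‖x‖ = q ^ (deg x)` on `𝔽_q((z⁻¹))`, where
`deg x = - (order of x as a Laurent series in z⁻¹)`; `‖0‖ = 0`. -/
def fnorm (x : FF K) : ℝ :=
  if toL x = 0 then 0 else (Fintype.card K : ℝ) ^ (-(toL x).order)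

lemma one_le_q : (1 : ℝ) ≤ (Fintype.card K : ℝ) := by
  exact_mod_cast Fintype.card_pos

lemma fnorm_nonneg (x : FF K) : 0 ≤ fnorm x := by
  unfold fnorm
  split_ifs
  · exact le_refl 0
  · exact zpow_nonneg (by positivity) _

lemma fnorm_eq_zero {x : FF K} : fnorm x = 0 ↔ x = 0 := by
  unfold fnorm
  split_ifs with h
  · exact ⟨fun _ => toL_eq_zero.mp h, fun _ => rfl⟩
  · constructor
    · intro hc
      exact absurd hc (zpow_ne_zero _ (by
        have h0 : (0:ℝ) < (Fintype.card K : ℝ) := by positivity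
        exact ne_of_gt h0))
    · intro hc
      exact absurd (toL_eq_zero.mpr hc) h

lemma fnorm_neg (x : FF K) : fnorm (-x) = fnorm x := by
  unfold fnorm
  rw [toL_neg]
  simp [neg_eq_zero, HahnSeries.order_neg]

lemma fnorm_add_le (x y : FF K) : fnorm (x + y) ≤ max (fnorm x) (fnorm y) := by
  by_cases hxy : x + y = 0
  · rw [fnorm_eq_zero.mpr hxy]
    exact le_max_of_le_left (fnorm_nonneg x)
  by_cases hx : x = 0
  · rw [hx, zero_add]
    exact le_max_right _ _
  by_cases hy : y = 0
  · rw [hy, add_zero]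
    exact le_max_left _ _
  have horder : min (toL x).order (toL y).order ≤ (toL (x + y)).order := by
    rw [toL_add]
    exact HahnSeries.min_order_le_order_add (show toL x + toL y ≠ 0 from hxy)
  have h1 : fnorm (x + y) = (Fintype.card K : ℝ) ^ (-(toL (x+y)).order) := by
    unfold fnorm
    rw [if_neg (show toL (x + y) ≠ 0 from hxy)]
  rcases le_total (toL x).order (toL y).order with h | h
  · have h2 : (toL x).order ≤ (toL (x+y)).order := le_trans (by simp [min_eq_left h]) horder
    refine le_max_of_le_left ?_
    rw [h1]
    unfold fnorm
    rw [if_neg (show toL x ≠ 0 from hx)]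
    exact zpow_le_zpow_right₀ one_le_q (by omega)
  · have h2 : (toL y).order ≤ (toL (x+y)).order := le_trans (by simp [min_eq_right h]) horder
    refine le_max_of_le_right ?_
    rw [h1]
    unfold fnorm
    rw [if_neg (show toL y ≠ 0 from hy)]
    exact zpow_le_zpow_right₀ one_le_q (by omega)

/-- The (ultra)metric `dist x y = ‖x - y‖` on `𝔽_q((z⁻¹))`. -/
instance : MetricSpace (FF K) where
  dist x y := fnorm (x - y)
  dist_self x := by
    show fnorm (x - x) = 0
    rw [sub_self]
    exact fnorm_eq_zero.mpr rfl
  dist_comm x y := by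
    show fnorm (x - y) = fnorm (y - x)
    have h : x - y = -(y - x) := by ring
    rw [h, fnorm_neg]
  dist_triangle x y z := by
    show fnorm (x - z) ≤ fnorm (x - y) + fnorm (y - z)
    have h : x - z = (x - y) + (y - z) := by ring
    calc fnorm (x - z) ≤ max (fnorm (x - y)) (fnorm (y - z)) := by
          rw [h]; exact fnorm_add_le _ _
      _ ≤ fnorm (x - y) + fnorm (y - z) :=
        max_le (le_add_of_nonneg_right (fnorm_nonneg _)) (le_add_of_nonneg_left (fnorm_nonneg _))
  eq_of_dist_eq_zero := by
    intro x y h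
    have h' : x - y = 0 := fnorm_eq_zero.mp h
    exact sub_eq_zero.mp h'

instance : MeasurableSpace (FF K) := borel _
instance : BorelSpace (FF K) := ⟨rfl⟩

/-- The canonical embedding of the polynomial ring `𝔽_q[z]` into `𝔽_q((z⁻¹))`:
the variable `z` is sent to `t⁻¹ = single (-1) 1`. -/
def polyF (P : Polynomial K) : FF K :=
  Polynomial.aeval (HahnSeries.single (-1 : ℤ) (1 : K)) P

/-- Supremum norm of a vector with entries in `𝔽_q((z⁻¹))`. -/
def vnorm {ι : Type*} [Fintype ι] (v : ι → FF K) : ℝ := ⨆ i, fnorm (v i)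

/-- `⟨v⟩`, the distance from the vector `v` to the nearest polynomial vector. -/
def vdist {ι : Type*} [Fintype ι] (v : ι → FF K) : ℝ :=
  ⨅ y : ι → Polynomial K, vnorm (fun i => v i - polyF (y i))

/-- `⟨x⟩`, the distance from the scalar `x` to the nearest polynomial. -/
def sdist (x : FF K) : ℝ := ⨅ y : Polynomial K, fnorm (x - polyF y)

/-- The fractional part `{x} = Σ_{i ≥ 1} a_i z^{-i}` of `x = Σ_i a_i z^{-i}`. -/
def fracPart (x : FF K) : FF K :=
  (⟨fun i => if 1 ≤ i then (toL x).coeff i else 0, (toL x).isPWO_support'.mono (by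
      intro i hi
      by_cases h : (1:ℤ) ≤ i
      · simpa [Function.mem_support, h] using hi
      · simp [Function.mem_support, h] at hi)⟩ : LaurentSeries K)

/-- The integer part `[x] = Σ_{i ≤ 0} a_i z^{-i}` of `x = Σ_i a_i z^{-i}`, as a polynomial
in `z`. -/
def intPoly (x : FF K) : Polynomial K :=
  ∑ i ∈ Finset.range ((-(toL x).order).toNat + 1),
    Polynomial.monomial i ((toL x).coeff (-(i : ℤ)))

/-- `x ∈ 𝔽_q((z⁻¹))` is irrational if it is not in `𝔽_q(z)`, i.e. is not a ratio of two
polynomials in `z`. -/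
def FIrrational (x : FF K) : Prop :=
  ∀ P Q : Polynomial K, Q ≠ 0 → x * polyF Q ≠ polyF P

section Exponents

variable {m n : ℕ}

/-- The norm `‖x‖ = max_j ‖x_j‖` of a polynomial vector `x`. -/
def pnorm {ι : Type*} [Fintype ι] (x : ι → Polynomial K) : ℝ :=
  vnorm (fun i => (polyF (x i) : FF K))

/-- The system `⟨A x - θ⟩ ≤ H^{-ω}`, `‖x‖ ≤ H` has a polynomial solution `x`. -/
def Solv (A : Matrix (Fin n) (Fin m) (FF K)) (θ : Fin n → FF K) (ω H : ℝ) : Prop :=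
  ∃ x : Fin m → Polynomial K,
    vdist (A.mulVec (fun j => polyF (x j)) - θ) ≤ H ^ (-ω) ∧ pnorm x ≤ H

/-- The system `⟨A x⟩ ≤ H^{-ω}`, `‖x‖ ≤ H` has a nonzero polynomial solution `x`. -/
def SolvHom (A : Matrix (Fin n) (Fin m) (FF K)) (ω H : ℝ) : Prop :=
  ∃ x : Fin m → Polynomial K, x ≠ 0 ∧
    vdist (A.mulVec (fun j => polyF (x j))) ≤ H ^ (-ω) ∧ pnorm x ≤ H

/-- The inhomogeneous exponent `ω(A, θ)`: the supremum (in `[0,∞]`) of all `ω` such that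
for arbitrarily large `H` the system `⟨A x - θ⟩ ≤ H^{-ω}`, `‖x‖ ≤ H` has a polynomial
solution. -/
def omegaInhom (A : Matrix (Fin n) (Fin m) (FF K)) (θ : Fin n → FF K) : ℝ≥0∞ :=
  ⨆ (ω : ℝ) (_ : ∀ H₀ : ℝ, ∃ H : ℝ, H₀ ≤ H ∧ Solv A θ ω H), ENNReal.ofReal ω

/-- The uniform inhomogeneous exponent `ω̂(A, θ)`: as `ω(A, θ)`, but with a solution for
all sufficiently large `H`. -/
def omegaHatInhom (A : Matrix (Fin n) (Fin m) (FF K)) (θ : Fin n → FF K) : ℝ≥0∞ :=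
  ⨆ (ω : ℝ) (_ : ∃ H₀ : ℝ, ∀ H : ℝ, H₀ ≤ H → Solv A θ ω H), ENNReal.ofReal ω

/-- The homogeneous exponent `ω(A)`. -/
def omegaHom (A : Matrix (Fin n) (Fin m) (FF K)) : ℝ≥0∞ :=
  ⨆ (ω : ℝ) (_ : ∀ H₀ : ℝ, ∃ H : ℝ, H₀ ≤ H ∧ SolvHom A ω H), ENNReal.ofReal ω

/-- The uniform homogeneous exponent `ω̂(A)`. -/
def omegaHatHom (A : Matrix (Fin n) (Fin m) (FF K)) : ℝ≥0∞ :=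
  ⨆ (ω : ℝ) (_ : ∃ H₀ : ℝ, ∀ H : ℝ, H₀ ≤ H → SolvHom A ω H), ENNReal.ofReal ω

/-- `A` is non-degenerate: the `𝔽_q[z]`-module `Aᵀ 𝔽_q[z]ⁿ + 𝔽_q[z]^m ⊆ 𝔽_q((z⁻¹))^m` has
rank `m + n` over `𝔽_q[z]`, i.e. its `m + n` natural generators are linearly independent
over `𝔽_q[z]`; equivalently, no nonzero polynomial vector `u` makes `Aᵀ u` a polynomial
vector. -/
def Nondegenerate (A : Matrix (Fin n) (Fin m) (FF K)) : Prop :=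
  ∀ u : Fin n → Polynomial K,
    (∃ v : Fin m → Polynomial K,
      A.transpose.mulVec (fun i => polyF (u i)) = fun j => polyF (v j)) → u = 0

/-- `liminf_{x ∈ 𝔽_q[z]^m, ‖x‖ → ∞} ‖x‖^{m/n} ⟨A x - θ⟩`, computed in `[0, ∞]`. -/
def badLiminf (A : Matrix (Fin n) (Fin m) (FF K)) (θ : Fin n → FF K) : ℝ≥0∞ :=
  Filter.liminf
    (fun x : Fin m → Polynomial K =>
      ENNReal.ofReal ((pnorm x) ^ ((m : ℝ) / (n : ℝ)) *
        vdist (A.mulVec (fun j => polyF (x j)) - θ)))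
    (Filter.comap (fun x : Fin m → Polynomial K => pnorm x) Filter.atTop)

/-- The set `Bad^ε(A)` of `θ` in the unit polydisc `𝕀ⁿ` with
`liminf_{‖x‖ → ∞} ‖x‖^{m/n} ⟨A x - θ⟩ ≥ ε`. -/
def Bad (A : Matrix (Fin n) (Fin m) (FF K)) (ε : ℝ) : Set (Fin n → FF K) :=
  {θ | (∀ i, fnorm (θ i) < 1) ∧ ENNReal.ofReal ε ≤ badLiminf A θ}

/-- The set `Bad(A) = ⋃_{ε > 0} Bad^ε(A)`. -/
def BadAll (A : Matrix (Fin n) (Fin m) (FF K)) : Set (Fin n → FF K) :=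
  ⋃ (ε : ℝ) (_ : 0 < ε), Bad A ε

/-- `M(y) = ⟨Aᵀ y⟩` for a polynomial vector `y`. -/
def Mfun (A : Matrix (Fin n) (Fin m) (FF K)) (y : Fin n → Polynomial K) : ℝ :=
  vdist (A.transpose.mulVec (fun i => polyF (y i)))

/-- `y 1, y 2, …` is a sequence of best approximations related to `Aᵀ`:
`1 = Y_1 < Y_2 < ⋯`, `M_1 > M_2 > ⋯`, and `M(x) ≥ M_k` for every nonzero polynomial
vector `x` with `‖x‖ < Y_{k+1}` (the value `y 0` is irrelevant). -/
def IsBestApproxSeq (A : Matrix (Fin n) (Fin m) (FF K))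
    (y : ℕ → Fin n → Polynomial K) : Prop :=
  pnorm (y 1) = 1 ∧
  (∀ k, 1 ≤ k → pnorm (y k) < pnorm (y (k + 1))) ∧
  (∀ k, 1 ≤ k → Mfun A (y (k + 1)) < Mfun A (y k)) ∧
  (∀ k, 1 ≤ k → ∀ x : Fin n → Polynomial K, x ≠ 0 → pnorm x < pnorm (y (k + 1)) →
    Mfun A (y k) ≤ Mfun A x)

end Exponents

section Scalar

/-- The system `⟨ξ x - θ⟩ ≤ H^{-ω}`, `‖x‖ ≤ H` has a polynomial solution `x`. -/
def sSolv (ξ θ : FF K) (ω H : ℝ) : Prop :=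
  ∃ x : Polynomial K, sdist (ξ * polyF x - θ) ≤ H ^ (-ω) ∧ fnorm (polyF x) ≤ H

/-- The scalar inhomogeneous exponent `ω((ξ), θ)`. -/
def somegaInhom (ξ θ : FF K) : ℝ≥0∞ :=
  ⨆ (ω : ℝ) (_ : ∀ H₀ : ℝ, ∃ H : ℝ, H₀ ≤ H ∧ sSolv ξ θ ω H), ENNReal.ofReal ω

/-- The scalar uniform inhomogeneous exponent `ω̂((ξ), θ)`. -/
def somegaHatInhom (ξ θ : FF K) : ℝ≥0∞ :=
  ⨆ (ω : ℝ) (_ : ∃ H₀ : ℝ, ∀ H : ℝ, H₀ ≤ H → sSolv ξ θ ω H), ENNReal.ofReal ω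

/-- The scalar homogeneous exponent `ω((ξ))`. -/
def somegaHom (ξ : FF K) : ℝ≥0∞ :=
  ⨆ (ω : ℝ) (_ : ∀ H₀ : ℝ, ∃ H : ℝ, H₀ ≤ H ∧ ∃ x : Polynomial K, x ≠ 0 ∧
      sdist (ξ * polyF x) ≤ H ^ (-ω) ∧ fnorm (polyF x) ≤ H), ENNReal.ofReal ω

/-- `liminf_{x ∈ 𝔽_q[z], ‖x‖ → ∞} ‖x‖ ⟨α x - θ⟩`, computed in `[0, ∞]`. -/
def sBadLiminf (α θ : FF K) : ℝ≥0∞ :=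
  Filter.liminf
    (fun x : Polynomial K => ENNReal.ofReal (fnorm (polyF x) * sdist (α * polyF x - θ)))
    (Filter.comap (fun x : Polynomial K => fnorm (polyF x)) Filter.atTop)

/-- The set `Bad^ε(α)` of `θ ∈ 𝕀` with `liminf_{‖x‖ → ∞} ‖x‖ ⟨α x - θ⟩ ≥ ε`. -/
def sBad (α : FF K) (ε : ℝ) : Set (FF K) :=
  {θ | fnorm θ < 1 ∧ ENNReal.ofReal ε ≤ sBadLiminf α θ}

end Scalar

section CF

/-- The Gauss map `T x = 1/x - [1/x]` on `𝔽_q((z⁻¹))`. -/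
def gaussMap (x : FF K) : FF K := fracPart x⁻¹

/-- `pquot α k` is the `(k+1)`-st partial quotient `A_{k+1} = [1 / T^k α]` of the
continued fraction expansion of `α`. -/
def pquot (α : FF K) (k : ℕ) : Polynomial K := intPoly ((gaussMap^[k] α)⁻¹)

/-- `cfQ α k` is the denominator `Q_k` of the `k`-th convergent of the continued fraction
expansion of `α`: `Q_0 = 1`, `Q_1 = A_1`, `Q_{k+2} = A_{k+2} Q_{k+1} + Q_k`. -/
def cfQ (α : FF K) : ℕ → Polynomial K
  | 0 => 1
  | 1 => pquot α 0
  | (k + 2) => pquot α (k + 1) * cfQ α (k + 1) + cfQ α k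

/-- `α` is singular on average: for every `c > 0` the proportion of `l ∈ {1, …, N}` for
which `‖{Q α}‖ ≤ c 2^{-l}` has a solution `Q ∈ 𝔽_q[z]` with `0 < ‖Q‖ ≤ 2^l` tends to `1`
as `N → ∞`. -/
def SingularOnAverage (α : FF K) : Prop :=
  ∀ c : ℝ, 0 < c →
    Filter.Tendsto
      (fun N : ℕ =>
        (((Finset.Icc 1 N).filter (fun l : ℕ =>
            ∃ Q : Polynomial K, Q ≠ 0 ∧ fnorm (polyF Q) ≤ 2 ^ l ∧
              fnorm (fracPart (polyF Q * α)) ≤ c / 2 ^ l)).card : ℝ) / (N : ℝ))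
      Filter.atTop (nhds 1)

end CF

end FPSDA

open FPSDA MeasureTheory

namespace FPSDA

variable {K : Type*} [Field K] [Fintype K]

lemma one_lt_q : (1 : ℝ) < (Fintype.card K : ℝ) := by
  exact_mod_cast Fintype.one_lt_card

lemma q_pos : (0 : ℝ) < (Fintype.card K : ℝ) := lt_trans one_pos one_lt_q

lemma fnorm_of_ne {x : FF K} (hx : x ≠ 0) :
    fnorm x = (Fintype.card K : ℝ) ^ (-(toL x).order) := by
  unfold fnorm
  rw [if_neg (fun h => hx (toL_eq_zero.mp h))]

lemma toL_mul (x y : FF K) : toL (x * y) = toL x * toL y := rfl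
lemma toL_one : toL (1 : FF K) = 1 := rfl

lemma fnorm_mul (x y : FF K) : fnorm (x * y) = fnorm x * fnorm y := by
  by_cases hx : x = 0
  · subst hx; simp [fnorm_eq_zero.mpr]
  by_cases hy : y = 0
  · subst hy; simp [fnorm_eq_zero.mpr]
  rw [fnorm_of_ne hx, fnorm_of_ne hy, fnorm_of_ne (mul_ne_zero hx hy), toL_mul,
    HahnSeries.order_mul (show toL x ≠ 0 from hx) (show toL y ≠ 0 from hy),
    ← zpow_add₀ q_pos.ne']
  congr 1; ring

lemma fnorm_one : fnorm (1 : FF K) = 1 := by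
  rw [fnorm_of_ne one_ne_zero, toL_one, HahnSeries.order_one]; simp

lemma fnorm_zero : fnorm (0 : FF K) = 0 := fnorm_eq_zero.mpr rfl

lemma fnorm_inv (x : FF K) : fnorm x⁻¹ = (fnorm x)⁻¹ := by
  by_cases hx : x = 0
  · subst hx; simp [fnorm_zero]
  · have := fnorm_mul x x⁻¹
    rw [mul_inv_cancel₀ hx, fnorm_one] at this
    exact eq_inv_of_mul_eq_one_right this.symm

lemma fnorm_le_iff (x : FF K) (m : ℤ) :
    fnorm x ≤ (Fintype.card K : ℝ) ^ (-m) ↔ ∀ i < m, (toL x).coeff i = 0 := by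
  by_cases hx : x = 0
  · subst hx
    simp [fnorm_zero, toL_zero]
    exact zpow_nonneg q_pos.le _
  rw [fnorm_of_ne hx, zpow_le_zpow_iff_right₀ one_lt_q, neg_le_neg_iff]
  constructor
  · intro h i hi
    exact HahnSeries.coeff_eq_zero_of_lt_order (lt_of_lt_of_le hi h)
  · intro h
    by_contra hc
    push Not at hc
    exact HahnSeries.coeff_order_eq_zero.not.mpr (show toL x ≠ 0 from hx) (h _ hc)

lemma fnorm_lt_one_iff (x : FF K) : fnorm x < 1 ↔ fnorm x ≤ (Fintype.card K : ℝ) ^ (-1 : ℤ) := by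
  by_cases hx : x = 0
  · subst hx
    simp [fnorm_zero]
  rw [fnorm_of_ne hx, zpow_le_zpow_iff_right₀ one_lt_q]
  rw [← zpow_zero (Fintype.card K : ℝ), zpow_lt_zpow_iff_right₀ one_lt_q]
  omega

lemma polyF_mul (P Q : Polynomial K) : polyF (P * Q) = polyF P * polyF Q :=
  map_mul (Polynomial.aeval (HahnSeries.single (-1 : ℤ) (1 : K))) P Q
lemma polyF_add (P Q : Polynomial K) : polyF (P + Q) = polyF P + polyF Q :=
  map_add (Polynomial.aeval (HahnSeries.single (-1 : ℤ) (1 : K))) P Q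
lemma polyF_sub (P Q : Polynomial K) : polyF (P - Q) = polyF P - polyF Q :=
  map_sub (Polynomial.aeval (HahnSeries.single (-1 : ℤ) (1 : K))) P Q
lemma polyF_zero : polyF (0 : Polynomial K) = 0 :=
  map_zero (Polynomial.aeval (HahnSeries.single (-1 : ℤ) (1 : K)))
lemma polyF_one : polyF (1 : Polynomial K) = 1 :=
  map_one (Polynomial.aeval (HahnSeries.single (-1 : ℤ) (1 : K)))

lemma polyF_monomial (n : ℕ) (a : K) :
    toL (polyF (Polynomial.monomial n a)) = HahnSeries.single (-(n : ℤ)) a := by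
  unfold polyF toL
  rw [Polynomial.aeval_monomial, HahnSeries.single_pow]
  have h : algebraMap K (LaurentSeries K) a = HahnSeries.C a := by
    rw [HahnSeries.algebraMap_apply']
    ext n; simp
  have h' : algebraMap K (HahnSeries ℤ K) a = HahnSeries.C a := h
  rw [h']
  simp [HahnSeries.C_apply, HahnSeries.single_mul_single]

lemma polyF_coeff (P : Polynomial K) (j : ℤ) :
    (toL (polyF P)).coeff j = if j ≤ 0 then P.coeff (-j).toNat else 0 := by
  induction P using Polynomial.induction_on' with
  | add p q hp hq =>
    rw [polyF_add, toL_add, HahnSeries.coeff_add, hp, hq]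
    split_ifs <;> simp
  | monomial n a =>
    rw [polyF_monomial, HahnSeries.coeff_single, Polynomial.coeff_monomial]
    split_ifs <;> first | rfl | omega

lemma polyF_eq_zero {P : Polynomial K} (h : polyF P = 0) : P = 0 := by
  ext n
  have := polyF_coeff P (-(n : ℤ))
  rw [h] at this
  simpa using this.symm

lemma fnorm_polyF {P : Polynomial K} (hP : P ≠ 0) :
    fnorm (polyF P) = (Fintype.card K : ℝ) ^ P.natDegree := by
  apply le_antisymm
  · have := (fnorm_le_iff (polyF P) (-(P.natDegree : ℤ))).mpr (by
      intro i hi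
      rw [polyF_coeff]
      split_ifs
      · apply Polynomial.coeff_eq_zero_of_natDegree_lt; omega
      · rfl)
    simpa using this
  · by_contra hc
    push Not at hc
    have hne : polyF P ≠ 0 := fun h => hP (polyF_eq_zero h)
    rw [fnorm_of_ne hne, ← zpow_natCast, zpow_lt_zpow_iff_right₀ one_lt_q] at hc
    have := HahnSeries.coeff_eq_zero_of_lt_order (x := toL (polyF P)) (i := -(P.natDegree : ℤ))
      (by omega)
    rw [polyF_coeff] at this
    simp at this
    exact hP this

lemma intPoly_add_fracPart (x : FF K) : polyF (intPoly x) + fracPart x = x := by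
  apply HahnSeries.ext
  funext j
  show (toL (polyF (intPoly x))).coeff j + (toL (fracPart x)).coeff j = (toL x).coeff j
  rw [polyF_coeff]
  have h2 : (toL (fracPart x)).coeff j = if 1 ≤ j then (toL x).coeff j else 0 := rfl
  rw [h2]
  by_cases hj : j ≤ 0
  · rw [if_pos hj, if_neg (by omega), add_zero]
    unfold intPoly
    rw [Polynomial.finsetSum_coeff]
    simp only [Polynomial.coeff_monomial]
    rw [Finset.sum_ite_eq' ]
    split_ifs with h
    · congr 1; omega
    · rw [HahnSeries.coeff_eq_zero_of_lt_order]
      simp only [Finset.mem_range] at h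
      omega
  · rw [if_neg hj, if_pos (by omega), zero_add]

lemma fnorm_fracPart (x : FF K) : fnorm (fracPart x) < 1 := by
  rw [fnorm_lt_one_iff, fnorm_le_iff]
  intro i hi
  show (if 1 ≤ i then (toL x).coeff i else 0) = 0
  rw [if_neg (by omega)]

lemma fnorm_add_of_lt {x y : FF K} (h : fnorm y < fnorm x) : fnorm (x + y) = fnorm x := by
  apply le_antisymm
  · exact (fnorm_add_le x y).trans (max_le le_rfl h.le)
  · have := fnorm_add_le (x + y) (-y)
    rw [add_neg_cancel_right, fnorm_neg] at this
    rcases le_max_iff.mp this with h1 | h1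
    · exact h1
    · exact absurd h (not_lt.mpr h1)

lemma fnorm_sub_le (x y : FF K) : fnorm (x - y) ≤ max (fnorm x) (fnorm y) := by
  rw [sub_eq_add_neg, ← fnorm_neg y]; exact fnorm_add_le _ _

/-- invariant of the continued fraction algorithm -/
lemma cf_inv (α : FF K) (hα : fnorm α < 1) (hirr : FIrrational α) (k : ℕ) :
    ∃ P P' Q' : Polynomial K,
      cfQ α (k + 1) = pquot α k * cfQ α k + Q' ∧
      fnorm (polyF Q') < fnorm (polyF (cfQ α k)) ∧
      (cfQ α k * P' - P * Q') ^ 2 = 1 ∧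
      α * polyF (cfQ α k) - polyF P = - (gaussMap^[k] α) * (α * polyF Q' - polyF P') ∧
      fnorm (polyF (cfQ α k)) * fnorm (α * polyF Q' - polyF P') = 1 ∧
      fnorm (gaussMap^[k] α) < 1 := by
  induction k with
  | zero =>
    refine ⟨0, 1, 0, ?_, ?_, ?_, ?_, ?_, ?_⟩
    · simp [cfQ]
    · simp [cfQ, polyF_zero, polyF_one, fnorm_zero, fnorm_one]
    · simp [cfQ]
    · simp [cfQ, polyF_zero, polyF_one]
    · simp [cfQ, polyF_zero, polyF_one, fnorm_one, fnorm_neg]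
    · simpa using hα
  | succ k ih =>
    obtain ⟨P, P', Q', h1, h2, h3, h4, h5, h6⟩ := ih
    have hQ : cfQ α k ≠ 0 := by
      intro h; rw [h, polyF_zero, fnorm_zero, zero_mul] at h5; exact zero_ne_one h5
    have hD : α * polyF (cfQ α k) - polyF P ≠ 0 := sub_ne_zero.mpr (hirr _ _ hQ)
    set β := gaussMap^[k] α with hβ
    have hβ0 : β ≠ 0 := by
      intro h; rw [h4, h] at hD; simp at hD
    have hgm : gaussMap^[k + 1] α = fracPart β⁻¹ := by
      rw [Function.iterate_succ_apply']; rfl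
    have hA : polyF (pquot α k) + gaussMap^[k + 1] α = β⁻¹ := by
      rw [hgm]; exact intPoly_add_fracPart _
    have hlt : fnorm (gaussMap^[k + 1] α) < 1 := by rw [hgm]; exact fnorm_fracPart _
    have hβpos : 0 < fnorm β := lt_of_le_of_ne (fnorm_nonneg _) (fun h => hβ0 (fnorm_eq_zero.mp h.symm))
    have hinv : 1 < fnorm β⁻¹ := by rw [fnorm_inv]; exact (one_lt_inv₀ hβpos).mpr h6
    have hAn : fnorm (polyF (pquot α k)) = fnorm β⁻¹ := by
      have : polyF (pquot α k) = β⁻¹ + -(gaussMap^[k + 1] α) := by rw [← hA]; ring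
      rw [this, fnorm_add_of_lt]
      rw [fnorm_neg]; exact hlt.trans hinv
    have hQpos : 0 < fnorm (polyF (cfQ α k)) := by
      apply lt_of_le_of_ne (fnorm_nonneg _)
      intro h; rw [← h, zero_mul] at h5; exact zero_ne_one h5
    have hlt2 : fnorm (polyF (cfQ α k)) < fnorm β⁻¹ * fnorm (polyF (cfQ α k)) := by
      nlinarith
    have hQ1 : fnorm (polyF (cfQ α (k + 1))) = fnorm β⁻¹ * fnorm (polyF (cfQ α k)) := by
      rw [h1, polyF_add, polyF_mul, fnorm_add_of_lt, fnorm_mul, hAn]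
      rw [fnorm_mul, hAn]
      exact h2.trans hlt2
    refine ⟨pquot α k * P + P', P, cfQ α k, rfl, ?_, ?_, ?_, ?_, hlt⟩
    · rw [hQ1]; exact hlt2
    · rw [h1, ← h3]; ring
    · have h4' : α * polyF Q' - polyF P' = -β⁻¹ * (α * polyF (cfQ α k) - polyF P) := by
        rw [h4]; field_simp
      have e : α * polyF (cfQ α (k + 1)) - polyF (pquot α k * P + P') =
          polyF (pquot α k) * (α * polyF (cfQ α k) - polyF P) + (α * polyF Q' - polyF P') := by
        rw [h1, polyF_add, polyF_add, polyF_mul, polyF_mul]; ring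
      rw [e, h4', ← hA]; ring
    · rw [hQ1, h4, fnorm_mul, fnorm_neg, fnorm_inv]
      field_simp
      linarith [h5]

lemma cf_main (α : FF K) (hα : fnorm α < 1) (hirr : FIrrational α) (k : ℕ) :
    cfQ α k ≠ 0 ∧ (cfQ α k).natDegree < (cfQ α (k + 1)).natDegree ∧
    ∃ P : Polynomial K, IsCoprime P (cfQ α k) ∧
      fnorm (α * polyF (cfQ α k) - polyF P) * fnorm (polyF (cfQ α k)) < 1 := by
  have hne : ∀ k, cfQ α k ≠ 0 := by
    intro k
    obtain ⟨P, P', Q', h1, h2, h3, h4, h5, h6⟩ := cf_inv α hα hirr k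
    intro h; rw [h, polyF_zero, fnorm_zero, zero_mul] at h5; exact zero_ne_one h5
  refine ⟨hne k, ?_, ?_⟩
  · obtain ⟨P, P', Q', h1, h2, h3, h4, h5, h6⟩ := cf_inv α hα hirr k
    obtain ⟨R, R', S', g1, g2, g3, g4, g5, g6⟩ := cf_inv α hα hirr (k+1)
    have hS : S' = cfQ α k := by
      have : cfQ α (k + 1 + 1) = pquot α (k+1) * cfQ α (k+1) + cfQ α k := rfl
      rw [this] at g1
      exact (add_left_cancel g1).symm
    rw [hS, fnorm_polyF (hne k), fnorm_polyF (hne (k+1))] at g2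
    exact (pow_lt_pow_iff_right₀ one_lt_q).mp g2
  · obtain ⟨P, P', Q', h1, h2, h3, h4, h5, h6⟩ := cf_inv α hα hirr k
    refine ⟨P, ?_, ?_⟩
    · refine ⟨-Q' * (cfQ α k * P' - P * Q'), P' * (cfQ α k * P' - P * Q'), ?_⟩
      rw [← h3]; ring
    · rw [h4, fnorm_mul, fnorm_neg, mul_assoc, mul_comm (fnorm (α * polyF Q' - polyF P')), h5]
      simpa using h6

/-- inhomogeneous approximation -/
lemma key_approx (α : FF K) (hα : fnorm α < 1) (hirr : FIrrational α) (k : ℕ) (θ : FF K) :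
    ∃ x y : Polynomial K, fnorm (polyF x) = (Fintype.card K : ℝ) ^ (cfQ α k).natDegree ∧
      fnorm (α * polyF x - polyF y - θ) * fnorm (polyF x) < 1 := by
  obtain ⟨hQ, -, P, ⟨a, b, hab⟩, hP⟩ := cf_main α hα hirr k
  set Q := cfQ α k with hQdef
  set y := intPoly (θ * polyF Q) with hy
  set x := (a * y) % Q + Q with hx
  have hdeg : ((a * y) % Q).degree < Q.degree := EuclideanDomain.mod_lt _ hQ
  have hxdeg : x.natDegree = Q.natDegree := by
    apply Polynomial.natDegree_eq_of_degree_eq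
    exact Polynomial.degree_add_eq_right_of_degree_lt hdeg
  have hx0 : x ≠ 0 := by
    intro h
    have : x.degree = Q.degree := Polynomial.degree_add_eq_right_of_degree_lt hdeg
    rw [h, Polynomial.degree_zero] at this
    exact hQ (Polynomial.degree_eq_bot.mp this.symm)
  have hxn : fnorm (polyF x) = fnorm (polyF Q) := by
    rw [fnorm_polyF hx0, fnorm_polyF hQ, hxdeg]
  -- P x - y divisible by Q
  obtain ⟨w, hw⟩ : Q ∣ P * x - y := by
    have h1 := EuclideanDomain.div_add_mod (a * y) Q
    refine ⟨P * (1 - (a * y) / Q) - b * y, ?_⟩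
    have : (a * y) % Q = a * y - Q * ((a * y) / Q) := eq_sub_of_add_eq' h1
    rw [hx, this]
    linear_combination (y) * hab
  refine ⟨x, w, by rw [hxn, fnorm_polyF hQ], ?_⟩
  have hw' : polyF P * polyF x - polyF y = polyF Q * polyF w := by
    rw [← polyF_mul, ← polyF_sub, hw, polyF_mul]
  have hfr := intPoly_add_fracPart (θ * polyF Q)
  rw [hxn, ← fnorm_mul]
  have e : (α * polyF x - polyF w - θ) * polyF Q
      = (α * polyF Q - polyF P) * polyF x - fracPart (θ * polyF Q) := by
    linear_combination hw' + hfr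
  rw [e]
  refine lt_of_le_of_lt (fnorm_sub_le _ _) (max_lt ?_ (fnorm_fracPart _))
  rw [fnorm_mul, hxn]; exact hP

/-- the first `n` coefficients -/
def fcyl (n : ℕ) (θ : FF K) : Fin n → K := fun i => (toL θ).coeff ((i : ℤ) + 1)

/-- the `m` coefficients after the first `n` -/
def ftail (n m : ℕ) (θ : FF K) : Fin m → K := fun i => (toL θ).coeff ((n : ℤ) + (i : ℤ) + 1)

/-- cylinders of length `n` meeting `S` -/
def imgs (S : Set (FF K)) (n : ℕ) : Finset (Fin n → K) :=
  Finset.univ.filter (fun u => ∃ θ ∈ S, fcyl n θ = u)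

lemma fcyl_close {n : ℕ} {θ θ' : FF K} (h : fnorm θ < 1) (h' : fnorm θ' < 1)
    (he : fcyl n θ = fcyl n θ') :
    fnorm (θ - θ') ≤ (Fintype.card K : ℝ) ^ (-((n : ℤ) + 1)) := by
  rw [fnorm_lt_one_iff, fnorm_le_iff] at h h'
  rw [fnorm_le_iff]
  intro i hi
  rw [toL_sub, HahnSeries.coeff_sub]
  by_cases hi1 : i < 1
  · rw [h i hi1, h' i hi1, sub_zero]
  · have := congrFun he ⟨(i - 1).toNat, by omega⟩
    unfold fcyl at this
    have e : (((i - 1).toNat : ℕ) : ℤ) + 1 = i := by omega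
    simp only [e] at this
    rw [this, sub_self]

lemma fcyl_eq {n : ℕ} {θ θ' : FF K}
    (h : fnorm (θ - θ') ≤ (Fintype.card K : ℝ) ^ (-((n : ℤ) + 1))) :
    fcyl n θ = fcyl n θ' := by
  rw [fnorm_le_iff] at h
  funext i
  have := h ((i : ℤ) + 1) (by have := i.2; omega)
  rw [toL_sub, HahnSeries.coeff_sub] at this
  exact sub_eq_zero.mp this

lemma fcyl_add {n m : ℕ} {θ θ' : FF K} (h : fcyl n θ = fcyl n θ')
    (h' : ftail n m θ = ftail n m θ') : fcyl (n + m) θ = fcyl (n + m) θ' := by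
  funext i
  by_cases hi : (i : ℕ) < n
  · exact congrFun h ⟨i, hi⟩
  · have := congrFun h' ⟨(i : ℕ) - n, by have := i.2; omega⟩
    unfold ftail at this
    have e : (n : ℤ) + (((i : ℕ) - n : ℕ) : ℤ) + 1 = (i : ℤ) + 1 := by omega
    simp only [e] at this
    exact this

lemma imgs_step (S : Set (FF K)) (n m b : ℕ)
    (H : ∀ u : Fin n → K, (Finset.univ.filter
      (fun v : Fin m → K => ∃ θ ∈ S, fcyl n θ = u ∧ ftail n m θ = v)).card ≤ b) :
    (imgs S (n + m)).card ≤ b * (imgs S n).card := by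
  have hr : ∀ θ : FF K, (fun i : Fin n => fcyl (n + m) θ (Fin.castAdd m i)) = fcyl n θ := by
    intro θ; rfl
  refine Finset.card_le_mul_card_image_of_maps_to
    (f := fun w : Fin (n + m) → K => fun i : Fin n => w (Fin.castAdd m i)) ?_ b ?_
  · intro w hw
    obtain ⟨θ, hθ, rfl⟩ := (Finset.mem_filter.mp hw).2
    exact Finset.mem_filter.mpr ⟨Finset.mem_univ _, θ, hθ, (hr θ).symm⟩
  · intro u _
    refine le_trans ?_ (H u)
    refine Finset.card_le_card_of_injOn (fun w : Fin (n + m) → K => fun i : Fin m => w (Fin.natAdd n i)) ?_ ?_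
    · intro w hw
      obtain ⟨hw1, hw2⟩ := Finset.mem_filter.mp (Finset.mem_coe.mp hw)
      obtain ⟨θ, hθ, rfl⟩ := (Finset.mem_filter.mp hw1).2
      refine Finset.mem_coe.mpr (Finset.mem_filter.mpr ⟨Finset.mem_univ _, θ, hθ, hw2, ?_⟩)
      funext i
      simp [ftail, fcyl]
    · intro w hw w' hw' he
      have h1 := (Finset.mem_filter.mp (Finset.mem_coe.mp hw)).2
      have h2 := (Finset.mem_filter.mp (Finset.mem_coe.mp hw')).2
      funext i
      refine Fin.addCases (fun j => ?_) (fun j => ?_) i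
      · exact congrFun (h1.trans h2.symm) j
      · exact congrFun he j

/-- the uniform pieces of the bad set -/
def SN (α : FF K) (c N : ℕ) : Set (FF K) :=
  {θ | fnorm θ < 1 ∧ ∀ x : Polynomial K, (Fintype.card K : ℝ) ^ N ≤ fnorm (polyF x) →
    (Fintype.card K : ℝ) ^ (-(c : ℤ)) ≤ fnorm (polyF x) * sdist (α * polyF x - θ)}

lemma sdist_le (x : FF K) (y : Polynomial K) : sdist x ≤ fnorm (x - polyF y) :=
  ciInf_le ⟨0, by rintro _ ⟨y, rfl⟩; exact fnorm_nonneg _⟩ y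

lemma imgs_mono_step (S : Set (FF K)) (n m : ℕ) :
    (imgs S (n + m)).card ≤ Fintype.card K ^ m * (imgs S n).card := by
  apply imgs_step
  intro u
  refine (Finset.card_le_univ _).trans ?_
  simp

lemma imgs_prune (α : FF K) (hα : fnorm α < 1) (hirr : FIrrational α) (c N k : ℕ)
    (hk : N ≤ (cfQ α k).natDegree) :
    (imgs (SN α c N) ((cfQ α k).natDegree + c)).card ≤
      (Fintype.card K ^ c - 1) * (imgs (SN α c N) (cfQ α k).natDegree).card := by
  set n := (cfQ α k).natDegree with hn
  apply imgs_step
  intro u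
  by_cases hu : ∃ θ ∈ SN α c N, fcyl n θ = u
  · obtain ⟨θ₀, hθ₀, hu⟩ := hu
    obtain ⟨x, y, hx, hxy⟩ := key_approx α hα hirr k θ₀
    rw [← hn] at hx
    set θ₁ := α * polyF x - polyF y with hθ₁
    have hqn : (0:ℝ) < (Fintype.card K : ℝ) ^ n := pow_pos q_pos _
    -- norm of difference
    have hd : fnorm (θ₁ - θ₀) ≤ (Fintype.card K : ℝ) ^ (-((n : ℤ) + 1)) := by
      by_cases h0 : θ₁ - θ₀ = 0
      · rw [h0, fnorm_zero]; exact zpow_nonneg q_pos.le _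
      · rw [hx, fnorm_of_ne h0, ← zpow_natCast, ← zpow_add₀ q_pos.ne',
          ← zpow_zero (Fintype.card K : ℝ), zpow_lt_zpow_iff_right₀ one_lt_q] at hxy
        rw [fnorm_of_ne h0, zpow_le_zpow_iff_right₀ one_lt_q]
        omega
    have h1n : fnorm θ₁ < 1 := by
      have : θ₁ = (θ₁ - θ₀) + θ₀ := by ring
      rw [this]
      refine lt_of_le_of_lt (fnorm_add_le _ _) (max_lt (lt_of_le_of_lt hd ?_) hθ₀.1)
      rw [← zpow_zero (Fintype.card K : ℝ), zpow_lt_zpow_iff_right₀ one_lt_q]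
      omega
    have hu1 : fcyl n θ₁ = u := by rw [← hu]; exact fcyl_eq hd
    have hnot : ftail n c θ₁ ∉ Finset.univ.filter
        (fun v : Fin c → K => ∃ θ ∈ SN α c N, fcyl n θ = u ∧ ftail n c θ = v) := by
      intro hmem
      obtain ⟨θ, hθ, h2, h3⟩ := (Finset.mem_filter.mp hmem).2
      have h4 := fcyl_close h1n hθ.1 (fcyl_add (hu1.trans h2.symm) h3.symm)
      have h5 := hθ.2 x (by rw [hx]; exact pow_le_pow_right₀ one_le_q hk)
      have h6 : sdist (α * polyF x - θ) ≤ fnorm (θ₁ - θ) := by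
        refine (sdist_le _ y).trans (le_of_eq ?_)
        congr 1; rw [hθ₁]; ring
      have h7 : fnorm (polyF x) * sdist (α * polyF x - θ) ≤
          (Fintype.card K : ℝ) ^ n * (Fintype.card K : ℝ) ^ (-(((n + c : ℕ) : ℤ) + 1)) := by
        rw [hx]
        exact mul_le_mul_of_nonneg_left (h6.trans h4) hqn.le
      have h8 := h5.trans h7
      rw [← zpow_natCast, ← zpow_add₀ q_pos.ne', zpow_le_zpow_iff_right₀ one_lt_q] at h8
      push_cast at h8
      omega
    have hcard : Fintype.card (Fin c → K) = Fintype.card K ^ c := by simp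
    have := Finset.card_lt_univ_of_notMem hnot
    rw [hcard] at this
    omega
  · rw [Finset.filter_eq_empty_iff.mpr]
    · simp
    · rintro v _ ⟨θ, hθ, h1, _⟩
      exact hu ⟨θ, hθ, h1⟩

lemma deg_mono (α : FF K) (hα : fnorm α < 1) (hirr : FIrrational α) :
    StrictMono (fun k => (cfQ α k).natDegree) :=
  strictMono_nat_of_lt_succ (fun k => (cf_main α hα hirr k).2.1)

/-- density of cylinders -/
def dens (S : Set (FF K)) (n : ℕ) : ℝ := (imgs S n).card / (Fintype.card K : ℝ) ^ n

lemma dens_anti (S : Set (FF K)) : Antitone (dens S) := by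
  apply antitone_nat_of_succ_le
  intro n
  have h : ((imgs S (n + 1)).card : ℝ) ≤ (Fintype.card K : ℝ) ^ 1 * (imgs S n).card := by
    exact_mod_cast imgs_mono_step S n 1
  unfold dens
  rw [div_le_div_iff₀ (pow_pos q_pos _) (pow_pos q_pos _), pow_succ]
  have := mul_le_mul_of_nonneg_right h (pow_pos (q_pos (K := K)) n).le
  linarith

lemma dens_prune (α : FF K) (hα : fnorm α < 1) (hirr : FIrrational α) (c N k : ℕ)
    (hk : N ≤ (cfQ α k).natDegree) :
    dens (SN α c N) (cfQ α (k + c)).natDegree ≤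
      (1 - ((Fintype.card K : ℝ) ^ c)⁻¹) * dens (SN α c N) (cfQ α k).natDegree := by
  have hle : (cfQ α k).natDegree + c ≤ (cfQ α (k + c)).natDegree := by
    have := StrictMono.add_le_nat (deg_mono α hα hirr) c k
    rw [add_comm c k] at this
    omega
  refine (dens_anti _ hle).trans ?_
  have h : ((imgs (SN α c N) ((cfQ α k).natDegree + c)).card : ℝ) ≤
      ((Fintype.card K : ℝ) ^ c - 1) * (imgs (SN α c N) (cfQ α k).natDegree).card := by
    have := imgs_prune α hα hirr c N k hk
    have h1 : 1 ≤ Fintype.card K ^ c := Nat.one_le_pow _ _ Fintype.card_pos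
    have h2 : ((imgs (SN α c N) ((cfQ α k).natDegree + c)).card : ℝ) ≤
      ((Fintype.card K ^ c - 1 : ℕ) : ℝ) * (imgs (SN α c N) (cfQ α k).natDegree).card := by
      exact_mod_cast this
    rw [Nat.cast_sub h1] at h2
    simpa using h2
  unfold dens
  have hc : (0:ℝ) < (Fintype.card K : ℝ) ^ c := pow_pos q_pos _
  have hn : (0:ℝ) < (Fintype.card K : ℝ) ^ (cfQ α k).natDegree := pow_pos q_pos _
  rw [pow_add, div_le_iff₀ (mul_pos hn hc)]
  refine h.trans (le_of_eq ?_)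
  field_simp

lemma dens_iter (α : FF K) (hα : fnorm α < 1) (hirr : FIrrational α) (c N k₀ : ℕ)
    (hk : N ≤ (cfQ α k₀).natDegree) (j : ℕ) :
    dens (SN α c N) (cfQ α (k₀ + c * j)).natDegree ≤
      (1 - ((Fintype.card K : ℝ) ^ c)⁻¹) ^ j * 1 := by
  have hρ : 0 ≤ (1 - ((Fintype.card K : ℝ) ^ c)⁻¹) := by
    have : ((Fintype.card K : ℝ) ^ c)⁻¹ ≤ 1 := inv_le_one_of_one_le₀ (one_le_pow₀ one_le_q)
    linarith
  induction j with
  | zero =>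
    simp only [mul_zero, add_zero, pow_zero, mul_one]
    refine (dens_anti _ (Nat.zero_le _)).trans ?_
    unfold dens
    have : (imgs (SN α c N) 0).card ≤ 1 := by
      refine (Finset.card_le_univ _).trans ?_
      simp
    simpa using this
  | succ j ih =>
    have h := dens_prune α hα hirr c N (k₀ + c * j)
      (hk.trans ((deg_mono α hα hirr).monotone (by simp)))
    rw [show k₀ + c * (j + 1) = k₀ + c * j + c by ring, pow_succ]
    refine h.trans ?_
    have := mul_le_mul_of_nonneg_left ih hρ
    linarith

lemma dimH_le_of_freq (S : Set (FF K)) (hS : ∀ θ ∈ S, fnorm θ < 1) (s : ℝ≥0) (C : ℝ)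
    (h : ∃ᶠ n : ℕ in atTop,
      ((imgs S n).card : ℝ) ≤ C * ((Fintype.card K : ℝ) ^ n) ^ (s : ℝ)) :
    dimH S ≤ s := by
  apply dimH_le_of_hausdorffMeasure_ne_top
  have hr : Tendsto (fun n : ℕ => ENNReal.ofReal (((Fintype.card K : ℝ) ^ n)⁻¹)) atTop (nhds 0) := by
    rw [← ENNReal.ofReal_zero]
    apply ENNReal.tendsto_ofReal
    exact (tendsto_pow_atTop_atTop_of_one_lt one_lt_q).inv_tendsto_atTop
  have hdiam : ∀ (n : ℕ) (u : {u // u ∈ imgs S n}),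
      Metric.ediam {θ | θ ∈ S ∧ fcyl n θ = u.1} ≤ ENNReal.ofReal (((Fintype.card K : ℝ) ^ n)⁻¹) := by
    intro n u
    apply Metric.ediam_le_of_forall_dist_le
    rintro x ⟨hx, hxu⟩ y ⟨hy, hyu⟩
    refine (fcyl_close (hS x hx) (hS y hy) (hxu.trans hyu.symm)).trans ?_
    rw [← zpow_natCast, ← zpow_neg, zpow_le_zpow_iff_right₀ one_lt_q]
    omega
  have key := Measure.hausdorffMeasure_le_liminf_sum (ι := fun n => {u // u ∈ imgs S n})
    (s : ℝ) S (l := atTop) _ hr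
    (fun n u => {θ | θ ∈ S ∧ fcyl n θ = u.1}) (Eventually.of_forall hdiam)
    (Eventually.of_forall (fun n θ hθ => Set.mem_iUnion.mpr
      ⟨⟨fcyl n θ, Finset.mem_filter.mpr ⟨Finset.mem_univ _, θ, hθ, rfl⟩⟩, hθ, rfl⟩))
  refine ne_top_of_le_ne_top (ENNReal.ofReal_ne_top (r := C)) (key.trans ?_)
  apply liminf_le_of_frequently_le'
  refine h.mono (fun n hn => ?_)
  have hqn : (0:ℝ) < (Fintype.card K : ℝ) ^ n := pow_pos q_pos _
  have hqs : (0:ℝ) < ((Fintype.card K : ℝ) ^ n) ^ (s : ℝ) := Real.rpow_pos_of_pos hqn _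
  calc ∑ u : {u // u ∈ imgs S n}, Metric.ediam {θ | θ ∈ S ∧ fcyl n θ = u.1} ^ (s : ℝ)
      ≤ ∑ u : {u // u ∈ imgs S n}, ENNReal.ofReal (((Fintype.card K : ℝ) ^ n)⁻¹) ^ (s : ℝ) :=
        Finset.sum_le_sum (fun u _ => ENNReal.rpow_le_rpow (hdiam n u) s.coe_nonneg)
    _ = ENNReal.ofReal ((imgs S n).card * (((Fintype.card K : ℝ) ^ n)⁻¹) ^ (s : ℝ)) := by
        rw [Finset.sum_const, ENNReal.ofReal_rpow_of_nonneg (inv_nonneg.mpr hqn.le) s.coe_nonneg,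
          ENNReal.ofReal_mul (Nat.cast_nonneg _)]
        simp
    _ ≤ ENNReal.ofReal C := by
        apply ENNReal.ofReal_le_ofReal
        rw [Real.inv_rpow hqn.le, ← div_eq_mul_inv, div_le_iff₀ hqs]
        exact hn

lemma sBad_subset (α : FF K) (ε : ℝ) (c : ℕ) (hc : (Fintype.card K : ℝ) ^ (-(c : ℤ)) < ε) :
    sBad α ε ⊆ ⋃ N : ℕ, SN α c N := by
  rintro θ ⟨h1, h2⟩
  have hpos : (0:ℝ) < (Fintype.card K : ℝ) ^ (-(c : ℤ)) := zpow_pos q_pos _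
  have h3 : ENNReal.ofReal ((Fintype.card K : ℝ) ^ (-(c : ℤ))) < sBadLiminf α θ :=
    lt_of_lt_of_le ((ENNReal.ofReal_lt_ofReal_iff (hpos.trans hc)).mpr hc) h2
  have h4 := eventually_lt_of_lt_liminf h3
  rw [eventually_comap] at h4
  obtain ⟨R, hR⟩ := eventually_atTop.mp h4
  obtain ⟨N, hN⟩ := pow_unbounded_of_one_lt R (one_lt_q (K := K))
  refine Set.mem_iUnion.mpr ⟨N, h1, fun x hx => ?_⟩
  have := hR _ (hN.le.trans hx) x rfl
  by_contra hcon
  push Not at hcon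
  exact absurd this (not_lt.mpr (ENNReal.ofReal_le_ofReal hcon.le))

lemma dimH_main (α : FF K) (hα : fnorm α < 1) (hirr : FIrrational α)
    (L : ℝ) (hL : 0 < L)
    (hf : ∃ᶠ k : ℕ in atTop, ((cfQ α k).natDegree : ℝ) * Real.log (Fintype.card K) ≤ L * k)
    (c : ℕ) (hc : 1 ≤ c) :
    ∃ s : ℝ≥0, s < 1 ∧ ∀ N, dimH (SN α c N) ≤ s := by
  set q : ℝ := (Fintype.card K : ℝ) with hq
  have hq1 : 1 < q := one_lt_q
  have hlq : 0 < Real.log q := Real.log_pos hq1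
  set ρ : ℝ := 1 - (q ^ c)⁻¹ with hρ
  have hqc : 1 < q ^ c := one_lt_pow₀ hq1 (by omega)
  have hρ0 : 0 < ρ := by
    have := inv_lt_one_of_one_lt₀ hqc
    rw [hρ]; linarith
  have hρ1 : ρ < 1 := by
    have : 0 < (q ^ c)⁻¹ := inv_pos.mpr (by linarith)
    rw [hρ]; linarith
  have hlρ : Real.log ρ < 0 := Real.log_neg hρ0 hρ1
  have hc0 : (0:ℝ) < c := by exact_mod_cast hc
  set δ₀ : ℝ := -Real.log ρ / (c * L) with hδ₀
  have hδ₀pos : 0 < δ₀ := div_pos (by linarith) (mul_pos hc0 hL)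
  set δ : ℝ := min δ₀ 1 with hδ
  have hδpos : 0 < δ := lt_min hδ₀pos one_pos
  have hδ1 : δ ≤ 1 := min_le_right _ _
  have hδδ : δ ≤ δ₀ := min_le_left _ _
  have hs0 : 0 ≤ 1 - δ := by linarith
  have hco : ((1 - δ).toNNReal : ℝ) = 1 - δ := Real.coe_toNNReal _ hs0
  refine ⟨(1 - δ).toNNReal, ?_, ?_⟩
  · rw [← NNReal.coe_lt_coe]; rw [hco, NNReal.coe_one]; linarith
  intro N
  have hdm := deg_mono α hα hirr
  obtain ⟨k₀, hk₀⟩ : ∃ k₀, N ≤ (cfQ α k₀).natDegree := ⟨N, hdm.le_apply⟩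
  set B : ℝ := (k₀ : ℝ) / c + 1 with hB
  apply dimH_le_of_freq _ (fun θ h => h.1) _ (Real.exp (-B * Real.log ρ))
  refine hdm.tendsto_atTop.frequently ((hf.and_eventually (eventually_ge_atTop k₀)).mono ?_)
  rintro k ⟨hk, hkk⟩
  set d := (cfQ α k).natDegree with hd
  set j := (k - k₀) / c with hj
  have hjle : k₀ + c * j ≤ k := by
    have := Nat.mul_div_le (k - k₀) c
    rw [← hj] at this
    omega
  have hjge : (k : ℝ) / c - B ≤ j := by
    have h1 : k - k₀ < c * (j + 1) := Nat.lt_mul_div_succ (k - k₀) (by omega)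
    have h2 : (k : ℝ) < k₀ + c * (j + 1) := by
      have : k < k₀ + c * (j + 1) := by omega
      exact_mod_cast this
    rw [hB, ← sub_sub, ← sub_div, sub_le_iff_le_add, div_le_iff₀ hc0]
    linarith
  have h1 : dens (SN α c N) d ≤ ρ ^ j := by
    have := dens_iter α hα hirr c N k₀ hk₀ j
    rw [mul_one] at this
    exact (dens_anti _ (hdm.monotone hjle)).trans this
  have hqd : 0 < q ^ d := pow_pos (by linarith) _
  have hexp : q ^ d = Real.exp (d * Real.log q) := by
    rw [mul_comm, Real.exp_mul, Real.exp_log (by linarith), Real.rpow_natCast]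
  have hρj : ρ ^ j = Real.exp (j * Real.log ρ) := by
    rw [mul_comm, Real.exp_mul, Real.exp_log hρ0, Real.rpow_natCast]
  unfold dens at h1
  rw [← hq, div_le_iff₀ hqd, hρj, hexp, ← Real.exp_add] at h1
  refine h1.trans ?_
  rw [hco]
  change _ ≤ Real.exp (-B * Real.log ρ) * (q ^ d) ^ (1 - δ)
  rw [hexp, ← Real.exp_mul, ← Real.exp_add, Real.exp_le_exp]
  have e1 : (j : ℝ) * Real.log ρ ≤ ((k : ℝ) / c - B) * Real.log ρ :=
    mul_le_mul_of_nonpos_right hjge hlρ.le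
  have e2 : (k : ℝ) / c * Real.log ρ = - (δ₀ * (L * k)) := by
    rw [hδ₀]; field_simp
  have e3 : δ * (d * Real.log q) ≤ δ₀ * (L * k) :=
    mul_le_mul hδδ hk (by positivity) hδ₀pos.le
  nlinarith

end FPSDA

/-- (Theorem 9.1 of the paper.) If `liminf_k (log ‖Q_k‖) / k < ∞`, then `Bad^ε(α)` has
Hausdorff dimension strictly less than `1` for every `ε > 0`. -/
theorem dimH_sBad_lt_one {K : Type*} [Field K] [Fintype K]
    (α : FF K) (hα : fnorm α < 1) (hirr : FIrrational α)
    (hliminf : Filter.liminf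
        (fun k : ℕ => ENNReal.ofReal (Real.log (fnorm (polyF (cfQ α k))) / (k : ℝ)))
        Filter.atTop < ⊤) :
    ∀ ε : ℝ, 0 < ε → dimH (sBad α ε) < 1 := by
  intro ε hε
  obtain ⟨L, hL1, -⟩ := ENNReal.lt_iff_exists_nnreal_btwn.mp hliminf
  have hfr := frequently_lt_of_liminf_lt (by isBoundedDefault) hL1
  have hf : ∃ᶠ k : ℕ in atTop, ((cfQ α k).natDegree : ℝ) * Real.log (Fintype.card K) ≤
      ((L : ℝ) + 1) * k := by
    refine (hfr.and_eventually (eventually_ge_atTop 1)).mono ?_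
    rintro k ⟨hk, hk1⟩
    have hk0 : (0:ℝ) < k := by exact_mod_cast hk1
    rw [fnorm_polyF (cf_main α hα hirr k).1, Real.log_pow] at hk
    have h2 := (ENNReal.ofReal_le_iff_le_toReal ENNReal.coe_ne_top).mp hk.le
    rw [ENNReal.coe_toReal, div_le_iff₀ hk0] at h2
    linarith
  obtain ⟨c, hc⟩ := exists_pow_lt_of_lt_one hε (inv_lt_one_of_one_lt₀ (one_lt_q (K := K)))
  have hc' : (Fintype.card K : ℝ) ^ (-((c + 1 : ℕ) : ℤ)) < ε := by
    refine lt_of_le_of_lt ?_ hc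
    rw [inv_pow, ← zpow_natCast, ← zpow_neg, zpow_le_zpow_iff_right₀ one_lt_q]
    push_cast; omega
  obtain ⟨s, hs, hN⟩ := dimH_main α hα hirr (L + 1) (by positivity) hf (c + 1) (by omega)
  refine lt_of_le_of_lt (dimH_mono (sBad_subset α ε (c + 1) hc')) ?_
  rw [dimH_iUnion]
  refine lt_of_le_of_lt (iSup_le hN) ?_
  exact_mod_cast hs
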